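/- arXiv:2312.09083 — 4 statements merged into one kernel-verified Lean document; each statement's English description precedes it below -/
import Mathlib

section
/- Let n ≥ 1 and let G ∈ 𝒢_{n,1} be reduced with at least one nontrivial strong component; let n* be the number of α-nodes in the core G*. For every integer j with j > n* and j > d_p − ℓ_p for all p = 1, …, q: (a) V(j + L) = V(j); (b) V⁺_cyc equals the union V(j) ∪ V(j+1) ∪ … ∪ V(j + ℓ_max − 1); (c) for each k ∈ {0, …, ℓ_max − 1}, the set V(j+k) is not contained in the union of the sets V(j+k') over k' ∈ {0, …, ℓ_max − 1} with k' ≠ k (in particular each V(j+k) is nonempty). -/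
open MeasureTheory

/-- Node type for digraphs in `𝒢_{n,1}`: `none` is the control node `β`,
`some i` is the state node `α_i`. -/
abbrev Node (n : ℕ) := Option (Fin n)

/-- `w` is a walk of length `k` from `u` to `v` in the digraph with edge set `E`. -/
def IsWalk {V : Type*} (E : Set (V × V)) (k : ℕ) (w : ℕ → V) (u v : V) : Prop :=
  w 0 = u ∧ w k = v ∧ ∀ t < k, (w t, w (t + 1)) ∈ E

/-- A path is a walk with no repeated node. -/
def IsPath {V : Type*} (E : Set (V × V)) (k : ℕ) (w : ℕ → V) (u v : V) : Prop :=
  IsWalk E k w u v ∧ ∀ s ≤ k, ∀ t ≤ k, w s = w t → s = t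

/-- A cycle of length `k ≥ 1` from `u` to itself, all nodes pairwise distinct except
the coinciding endpoints. -/
def IsCycle {V : Type*} (E : Set (V × V)) (k : ℕ) (w : ℕ → V) (u : V) : Prop :=
  1 ≤ k ∧ IsWalk E k w u u ∧ ∀ s < k, ∀ t < k, w s = w t → s = t

def Reachable {V : Type*} (E : Set (V × V)) (u v : V) : Prop :=
  ∃ k w, IsWalk E k w u v

/-- `u` lies on a cycle of the digraph. -/
def OnCycle {V : Type*} (E : Set (V × V)) (u : V) : Prop :=
  ∃ k w, IsCycle E k w u

def WeaklyConnected {V : Type*} (E : Set (V × V)) : Prop :=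
  ∀ u v : V, ∃ (k : ℕ) (w : ℕ → V), w 0 = u ∧ w k = v ∧
    ∀ t < k, (w t, w (t + 1)) ∈ E ∨ (w (t + 1), w t) ∈ E

/-- Membership in the class `𝒢_{n,1}`: no edge ends at `β` and the digraph is
weakly connected. -/
def MemG (n : ℕ) (E : Set (Node n × Node n)) : Prop :=
  (∀ e ∈ E, e.2 ≠ (none : Node n)) ∧ WeaklyConnected E

/-- `V⁺_cyc`: nodes reachable by a walk from some node lying on a cycle. -/
def CycSucc {V : Type*} (E : Set (V × V)) : Set V :=
  {v | ∃ u, OnCycle E u ∧ Reachable E u v}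

/-- The node set of the core relative to a node set `N`: `N \ V⁺_cyc`. -/
def CoreOn {W : Type*} (N : Set W) (F : Set (W × W)) : Set W := N \ CycSucc F

/-- The node set `V*` of the core `G*` of `G`. -/
def CoreNodes (n : ℕ) (E : Set (Node n × Node n)) : Set (Node n) :=
  CoreOn Set.univ E

/-- The core of `G` contains a directed spanning path: a path of `G` whose node set
is exactly `V*`. -/
def HasCoreSpanningPath (n : ℕ) (E : Set (Node n × Node n)) : Prop :=
  ∃ (k : ℕ) (w : ℕ → Node n) (u v : Node n), IsPath E k w u v ∧
    {x | ∃ t ≤ k, w t = x} = CoreNodes n E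

/-- A compliant pair `(A, b) ∈ 𝕍(G)`: bounded continuous, with the sparsity
pattern dictated by the edge set `E`. -/
def Compliant {n : ℕ} {S : Type*} [TopologicalSpace S] (E : Set (Node n × Node n))
    (A : S → Fin n → Fin n → ℝ) (b : S → Fin n → ℝ) : Prop :=
  Continuous A ∧ Continuous b ∧
  (∃ C, ∀ σ i j, |A σ i j| ≤ C) ∧ (∃ C, ∀ σ i, |b σ i| ≤ C) ∧
  (∀ σ (i j : Fin n), ((some j : Node n), (some i : Node n)) ∉ E → A σ i j = 0) ∧
  (∀ σ (i : Fin n), ((none : Node n), (some i : Node n)) ∉ E → b σ i = 0)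

/-- The averaged-controllability rank criterion: the span of the Bochner integrals
`∫ A(σ)^k b(σ) dμ`, `k ∈ ℕ`, is all of `ℝⁿ`. -/
def RankCriterion {n : ℕ} {S : Type*} [MeasurableSpace S]
    (μ : Measure S) (A : S → Fin n → Fin n → ℝ) (b : S → Fin n → ℝ) : Prop :=
  Submodule.span ℝ {x : Fin n → ℝ |
    ∃ k : ℕ, x = ∫ σ, (Matrix.of (A σ) ^ k).mulVec (b σ) ∂μ} = ⊤

/-- `S` is a topological manifold of dimension `d`. -/
def IsTopManifold (d : ℕ) (S : Type*) [TopologicalSpace S] : Prop :=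
  ∀ x : S, ∃ U : Set S, IsOpen U ∧ x ∈ U ∧
    ∃ W : Set (EuclideanSpace ℝ (Fin d)), IsOpen W ∧ Nonempty (↥U ≃ₜ ↥W)

/-- The support of `μ` contains a nonempty open set. -/
def SupportHasOpen {S : Type*} [TopologicalSpace S] [MeasurableSpace S]
    (μ : Measure S) : Prop :=
  ∃ U : Set S, IsOpen U ∧ U.Nonempty ∧ ∀ W ⊆ U, IsOpen W → W.Nonempty → 0 < μ W

/-- There is exactly one path from `u` to `v`. -/
def UniquePathFrom {V : Type*} (E : Set (V × V)) (u v : V) : Prop :=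
  (∃ k w, IsPath E k w u v) ∧
  ∀ (k : ℕ) (w : ℕ → V) (k' : ℕ) (w' : ℕ → V),
    IsPath E k w u v → IsPath E k' w' u v → k = k' ∧ ∀ t ≤ k, w t = w' t

/-- A directed tree on the node set `N`: there is a unique root, from which every node
is reachable by a unique path. -/
def IsDirectedTree {W : Type*} (N : Set W) (F : Set (W × W)) : Prop :=
  ∃ r ∈ N, (∀ v ∈ N, UniquePathFrom F r v) ∧
    (∀ r' ∈ N, (∀ v ∈ N, Reachable F r' v) → r' = r)

/-- The strong component of `u`: nodes mutually reachable with `u`. -/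
def StrongComp {V : Type*} (E : Set (V × V)) (u : V) : Set V :=
  {v | Reachable E u v ∧ Reachable E v u}

/-- The nodes of the skeleton graph (condensation): the strong components. -/
def SkelNodes {V : Type*} (E : Set (V × V)) : Set (Set V) :=
  {C | ∃ u, C = StrongComp E u}

/-- The edges of the skeleton graph: `(C, C')` is an edge whenever some edge of `E`
goes from a node of `C` to a node of `C'`. -/
def SkelEdges {V : Type*} (E : Set (V × V)) : Set (Set V × Set V) :=
  {p | p.1 ∈ SkelNodes E ∧ p.2 ∈ SkelNodes E ∧ ∃ u ∈ p.1, ∃ v ∈ p.2, (u, v) ∈ E}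

/-- The induced subgraph on `N` (w.r.t. the ambient edge set `F`) is a directed path:
its nodes can be ordered `w 0, …, w r` so that its edges are exactly the consecutive
pairs. -/
def IsPathGraphOn {W : Type*} (N : Set W) (F : Set (W × W)) : Prop :=
  ∃ (r : ℕ) (w : ℕ → W), (∀ s ≤ r, ∀ t ≤ r, w s = w t → s = t) ∧
    {x | ∃ t ≤ r, w t = x} = N ∧
    (∀ p : W × W, (p ∈ F ∧ p.1 ∈ N ∧ p.2 ∈ N) ↔ ∃ t < r, p = (w t, w (t + 1)))

/-- The induced subgraph on `C` is a single directed cycle: its nodes can be cyclically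
ordered so that its edges are exactly the consecutive pairs. -/
def IsSingleCycleOn {V : Type*} (C : Set V) (E : Set (V × V)) : Prop :=
  ∃ (l : ℕ) (w : ℕ → V), 1 ≤ l ∧ (∀ s < l, ∀ t < l, w s = w t → s = t) ∧
    {x | ∃ t < l, w t = x} = C ∧
    (∀ p : V × V, (p ∈ E ∧ p.1 ∈ C ∧ p.2 ∈ C) ↔ ∃ t < l, p = (w t, w ((t + 1) % l)))

/-- `G ∈ 𝒢_{n,1}` is reduced (Definition 5 of the paper): (1) the skeleton graph `S`
with self-loops removed is a directed tree and the core `S*` of `S` is a directed path;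
(2) every edge of `S` between distinct components comes from a unique edge of `G`;
(3) every node of `S` with a self-loop is an out-neighbor of `S*`, and every nontrivial
strong component of `G` is a single directed cycle. -/
def ReducedGraph (n : ℕ) (E : Set (Node n × Node n)) : Prop :=
  MemG n E ∧
  IsDirectedTree (SkelNodes E) {p ∈ SkelEdges E | p.1 ≠ p.2} ∧
  IsPathGraphOn (CoreOn (SkelNodes E) (SkelEdges E)) (SkelEdges E) ∧
  (∀ p ∈ SkelEdges E, p.1 ≠ p.2 →
    ∃! e : Node n × Node n, e ∈ E ∧ e.1 ∈ p.1 ∧ e.2 ∈ p.2) ∧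
  (∀ C : Set (Node n), (C, C) ∈ SkelEdges E →
    (∃ C' ∈ CoreOn (SkelNodes E) (SkelEdges E), (C', C) ∈ SkelEdges E) ∧
    IsSingleCycleOn C E)

/-- `V(j)`: nodes reachable from `β` by a walk of length `j`. -/
def VSet {n : ℕ} (E : Set (Node n × Node n)) (j : ℕ) : Set (Node n) :=
  {v | ∃ w : ℕ → Node n, IsWalk E j w (none : Node n) v}

/-- `V_p⁺`: nodes reachable by a walk from some node of the component `C`. -/
def VpPlus {n : ℕ} (E : Set (Node n × Node n)) (C : Set (Node n)) : Set (Node n) :=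
  {v | ∃ u ∈ C, Reachable E u v}

section Aux
variable {V : Type*} {E : Set (V × V)}

def Wk (E : Set (V × V)) (k : ℕ) (u v : V) : Prop := ∃ w, IsWalk E k w u v

theorem Wk.reach {k : ℕ} {u v : V} (h : Wk E k u v) : Reachable E u v := ⟨k, h⟩

theorem IsWalk.sub {k : ℕ} {w : ℕ → V} {u v : V} (h : IsWalk E k w u v) {s t : ℕ}
    (hst : s ≤ t) (htk : t ≤ k) : IsWalk E (t - s) (fun i => w (s + i)) (w s) (w t) := by
  refine ⟨by simp, by simp [Nat.add_sub_cancel' hst], fun i hi => ?_⟩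
  exact h.2.2 (s + i) (by omega)

theorem Wk.add {k m : ℕ} {u v x : V} (h : Wk E k u v) (h' : Wk E m v x) : Wk E (k + m) u x := by
  obtain ⟨w, h0, hk, hw⟩ := h
  obtain ⟨w', h0', hk', hw'⟩ := h'
  refine ⟨fun i => if i ≤ k then w i else w' (i - k), by simp [h0], ?_, ?_⟩
  · by_cases hm : m = 0
    · subst hm; simp [hk, ← hk', h0']
    · have : ¬ (k + m ≤ k) := by omega
      simp [this, hk']
  · intro t ht
    rcases lt_trichotomy t k with h1 | h1 | h1
    · have e1 : t ≤ k := h1.le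
      have e2 : t + 1 ≤ k := h1
      simp only [e1, e2, if_true]; exact hw t h1
    · subst h1
      have e2 : ¬ (t + 1 ≤ t) := by omega
      simp only [le_refl, e2, if_true, if_false, hk]
      have := hw' 0 (by omega)
      rw [h0'] at this
      simpa using this
    · have e1 : ¬ (t ≤ k) := by omega
      have e2 : ¬ (t + 1 ≤ k) := by omega
      simp only [e1, e2, if_false]
      have := hw' (t - k) (by omega)
      rwa [show t - k + 1 = t + 1 - k by omega] at this

theorem Wk.zero (u : V) : Wk E 0 u u := ⟨fun _ => u, rfl, rfl, by intro t ht; omega⟩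

theorem Wk.one {u v : V} (h : (u, v) ∈ E) : Wk E 1 u v := by
  refine ⟨fun i => if i = 0 then u else v, by simp, by simp, ?_⟩
  intro t ht
  obtain rfl : t = 0 := by omega
  simpa using h

theorem Reachable.rfl' (u : V) : Reachable E u u := ⟨0, Wk.zero u⟩

theorem Reachable.trans' {u v x : V} (h : Reachable E u v) (h' : Reachable E v x) :
    Reachable E u x := by
  obtain ⟨k, h⟩ := h
  obtain ⟨m, h'⟩ := h'
  exact ⟨k + m, Wk.add h h'⟩

theorem Reachable.edge {u v : V} (h : (u, v) ∈ E) : Reachable E u v := ⟨1, Wk.one h⟩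

theorem IsWalk.reach {k : ℕ} {w : ℕ → V} {u v : V} (h : IsWalk E k w u v) {s t : ℕ}
    (hst : s ≤ t) (htk : t ≤ k) : Reachable E (w s) (w t) := ⟨_, _, h.sub hst htk⟩

theorem sc_self (u : V) : u ∈ StrongComp E u := ⟨Reachable.rfl' u, Reachable.rfl' u⟩

theorem sc_eq {u v : V} (h : v ∈ StrongComp E u) : StrongComp E v = StrongComp E u := by
  ext x
  exact ⟨fun hx => ⟨h.1.trans' hx.1, hx.2.trans' h.2⟩, fun hx => ⟨h.2.trans' hx.1, hx.2.trans' h.1⟩⟩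

theorem sc_eq_iff {u v : V} :
    StrongComp E u = StrongComp E v ↔ Reachable E u v ∧ Reachable E v u := by
  constructor
  · intro h
    have : v ∈ StrongComp E u := h ▸ sc_self v
    exact this
  · intro h
    exact (sc_eq (u := u) (v := v) h).symm

theorem enter {k : ℕ} {w : ℕ → V} {u v : V} (h : IsWalk E k w u v) (P : V → Prop)
    (hu : ¬ P u) (hv : P v) : ∃ t < k, ¬ P (w t) ∧ P (w (t + 1)) := by
  by_contra hc
  push Not at hc
  have : ∀ t ≤ k, ¬ P (w t) := by
    intro t
    induction t with
    | zero => intro _; rw [h.1]; exact hu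
    | succ t ih => intro ht; exact hc t (by omega) (ih (by omega))
  exact this k le_rfl (h.2.1 ▸ hv)

theorem mem_skel {C : Set V} (hC : C ∈ SkelNodes E) {u : V} (hu : u ∈ C) : C = StrongComp E u := by
  obtain ⟨x, rfl⟩ := hC
  exact (sc_eq hu).symm

theorem skel_reach {k : ℕ} {w : ℕ → Set V} {A B : Set V}
    (h : IsWalk {p ∈ SkelEdges E | p.1 ≠ p.2} k w A B) (hA : A ∈ SkelNodes E)
    {s t : ℕ} (hst : s ≤ t) (htk : t ≤ k) :
    ∀ u ∈ w s, ∀ v ∈ w t, Reachable E u v := by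
  have hn : ∀ i ≤ k, w i ∈ SkelNodes E := by
    intro i hi
    rcases Nat.eq_zero_or_pos i with rfl | h0
    · rw [h.1]; exact hA
    · have := h.2.2 (i - 1) (by omega)
      rw [Nat.sub_add_cancel h0] at this
      exact this.1.2.1
  have hsame : ∀ i ≤ k, ∀ u ∈ w i, ∀ v ∈ w i, Reachable E u v := by
    intro i hi u hu v hv
    rw [mem_skel (hn i hi) hu] at hv
    exact hv.1
  induction t, hst using Nat.le_induction with
  | base => exact hsame s htk
  | succ t hst ih =>
    intro u hu v hv
    obtain ⟨⟨h1, h2, a, ha, b, hb, hab⟩, -⟩ := h.2.2 t (by omega)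
    exact (ih (by omega) u hu a ha).trans' ((Reachable.edge hab).trans' (hsame (t+1) htk b hb v hv))

theorem skel_path {k : ℕ} {w : ℕ → Set V} {A B : Set V}
    (h : IsWalk {p ∈ SkelEdges E | p.1 ≠ p.2} k w A B) (hA : A ∈ SkelNodes E) :
    IsPath {p ∈ SkelEdges E | p.1 ≠ p.2} k w A B := by
  have key : ∀ s t, s < t → t ≤ k → w s ≠ w t := by
    intro s t hst ht he
    obtain ⟨⟨h1, h2, a, ha, b, hb, hab⟩, hne⟩ := h.2.2 s (by omega)
    apply hne
    have r1 := Reachable.edge hab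
    have r2 := skel_reach h hA (s := s + 1) (t := t) (by omega) ht b hb a (he ▸ ha)
    have e1 := mem_skel h1 ha
    have e2 := mem_skel h2 hb
    simp only at e1 e2 ⊢
    rw [e1, e2, sc_eq_iff]
    exact ⟨r1, r2⟩
  refine ⟨h, fun s hs t ht he => ?_⟩
  rcases lt_trichotomy s t with h1 | h1 | h1
  · exact absurd he (key s t h1 ht)
  · exact h1
  · exact absurd he.symm (key t s h1 hs)

theorem f1 (htree : IsDirectedTree (SkelNodes E) {p ∈ SkelEdges E | p.1 ≠ p.2})
    (huniq : ∀ p ∈ SkelEdges E, p.1 ≠ p.2 → ∃! e : V × V, e ∈ E ∧ e.1 ∈ p.1 ∧ e.2 ∈ p.2)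
    {a b a' b' : V} (h : (a, b) ∈ E) (h' : (a', b') ∈ E)
    (hb : StrongComp E b' = StrongComp E b) (ha : StrongComp E a ≠ StrongComp E b)
    (ha' : StrongComp E a' ≠ StrongComp E b) : a = a' ∧ b = b' := by
  obtain ⟨r, hr, hup, -⟩ := htree
  have hb'm : b' ∈ StrongComp E b := hb ▸ sc_self b'
  have e1 : (StrongComp E a, StrongComp E b) ∈ SkelEdges E :=
    ⟨⟨a, rfl⟩, ⟨b, rfl⟩, a, sc_self a, b, sc_self b, h⟩
  have e2 : (StrongComp E a', StrongComp E b) ∈ SkelEdges E :=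
    ⟨⟨a', rfl⟩, ⟨b, rfl⟩, a', sc_self a', b', hb'm, h'⟩
  have ext : ∀ x : V, (StrongComp E x, StrongComp E b) ∈ SkelEdges E →
      StrongComp E x ≠ StrongComp E b → ∃ k w, IsPath {p ∈ SkelEdges E | p.1 ≠ p.2} (k+1) w r
        (StrongComp E b) ∧ w k = StrongComp E x := by
    intro x hx hne
    obtain ⟨k, w, hw, -⟩ := (hup (StrongComp E x) ⟨x, rfl⟩).1
    refine ⟨k, fun i => if i ≤ k then w i else StrongComp E b, skel_path ⟨?_, ?_, ?_⟩ hr, ?_⟩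
    · simp [hw.1]
    · simp
    · intro t ht
      by_cases h1 : t < k
      · have e1 : t ≤ k := h1.le
        have e2 : t + 1 ≤ k := h1
        simp only [e1, e2, if_true]; exact hw.2.2 t h1
      · obtain rfl : t = k := by omega
        have e2 : ¬ (t + 1 ≤ t) := by omega
        simp only [le_refl, e2, if_true, if_false, hw.2.1]
        exact ⟨hx, hne⟩
    · simp [hw.2.1]
  obtain ⟨k, w, hw, hk⟩ := ext a e1 ha
  obtain ⟨k', w', hw', hk'⟩ := ext a' e2 ha'
  obtain ⟨hkk, hww⟩ := (hup (StrongComp E b) ⟨b, rfl⟩).2 _ _ _ _ hw hw'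
  obtain rfl : k = k' := by omega
  have haa : StrongComp E a = StrongComp E a' := by
    rw [← hk, ← hk']; exact hww k (by omega)
  obtain ⟨e, -, he⟩ := huniq _ e1 ha
  have := (he (a, b) ⟨h, sc_self a, sc_self b⟩).trans
    (he (a', b') ⟨h', by simp only; rw [haa]; exact sc_self a', hb'm⟩).symm
  simpa using this

theorem skel_core {u : V} (h : StrongComp E u ∉ CycSucc (SkelEdges E)) : u ∉ CycSucc E := by
  rintro ⟨x, ⟨k, w, hk, hw, -⟩, m, w', hw'⟩
  apply h
  refine ⟨StrongComp E x, ⟨1, fun _ => StrongComp E x, le_rfl, ⟨rfl, rfl, ?_⟩, ?_⟩,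
    m, fun i => StrongComp E (w' i), ?_, ?_, ?_⟩
  · intro t _
    refine ⟨⟨x, rfl⟩, ⟨x, rfl⟩, x, sc_self x, w 1, ?_, ?_⟩
    · have h1 := hw.reach (s := 0) (t := 1) (by omega) hk
      have h2 := hw.reach (s := 1) (t := k) hk le_rfl
      rw [hw.1] at h1
      rw [hw.2.1] at h2
      exact ⟨h1, h2⟩
    · have := hw.2.2 0 (by omega)
      rwa [hw.1] at this
  · intro s hs t ht _; omega
  · simp only [hw'.1]
  · simp only [hw'.2.1]
  · intro t ht
    exact ⟨⟨_, rfl⟩, ⟨_, rfl⟩, _, sc_self _, _, sc_self _, hw'.2.2 t ht⟩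

theorem single_in {C : Set V} (h : IsSingleCycleOn C E) {a a' b : V} (hab : (a, b) ∈ E)
    (hab' : (a', b) ∈ E) (ha : a ∈ C) (ha' : a' ∈ C) (hb : b ∈ C) : a = a' := by
  obtain ⟨l, w, hl, hinj, -, he⟩ := h
  obtain ⟨t, ht, h1⟩ := (he (a, b)).1 ⟨hab, ha, hb⟩
  obtain ⟨t', ht', h2⟩ := (he (a', b)).1 ⟨hab', ha', hb⟩
  simp only [Prod.mk.injEq] at h1 h2
  have := hinj _ (Nat.mod_lt _ hl) _ (Nat.mod_lt _ hl) (h1.2.symm.trans h2.2)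
  have h3 : t ≡ t' [MOD l] := Nat.ModEq.add_right_cancel' 1 this
  rw [h1.1, h2.1, Nat.ModEq.eq_of_lt_of_lt h3 ht ht']

theorem single_out {C : Set V} (h : IsSingleCycleOn C E) {a b b' : V} (hab : (a, b) ∈ E)
    (hab' : (a, b') ∈ E) (ha : a ∈ C) (hb : b ∈ C) (hb' : b' ∈ C) : b = b' := by
  obtain ⟨l, w, hl, hinj, -, he⟩ := h
  obtain ⟨t, ht, h1⟩ := (he (a, b)).1 ⟨hab, ha, hb⟩
  obtain ⟨t', ht', h2⟩ := (he (a, b')).1 ⟨hab', ha, hb'⟩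
  simp only [Prod.mk.injEq] at h1 h2
  have := hinj _ ht _ ht' (h1.1.symm.trans h2.1)
  rw [h1.2, h2.2, this]

/-- walks inside a single cycle -/
theorem closed_dvd {C : Set V} (hC : C ∈ SkelNodes E) (h : IsSingleCycleOn C E)
    {l : ℕ} {c : ℕ → V} {u : V} (hc : IsCycle E l c u) (hset : {x | ∃ t < l, c t = x} = C)
    {m : ℕ} {w : ℕ → V} {x : V} (hx : x ∈ C) (hw : IsWalk E m w x x) : l ∣ m := by
  obtain ⟨hl, hcw, hinj⟩ := hc
  have hmem : ∀ t < l, c t ∈ C := fun t ht => hset ▸ ⟨t, ht, rfl⟩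
  have hmod : ∀ i, (c (i % l), c ((i + 1) % l)) ∈ E := by
    intro i
    have hlt := Nat.mod_lt i hl
    have h1 := hcw.2.2 (i % l) hlt
    by_cases h2 : i % l + 1 < l
    · rwa [Nat.add_mod, Nat.mod_eq_of_lt (a := 1) (by omega), Nat.mod_eq_of_lt h2]
    · have h3 : i % l + 1 = l := by omega
      have h4 : (i + 1) % l = 0 := by
        rw [← Nat.mod_add_mod, h3, Nat.mod_self]
      rw [h4, hcw.1, ← hcw.2.1]
      rwa [h3] at h1
  rw [← hset] at hx
  obtain ⟨s, hs, hsx⟩ := hx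
  have hCx : C = StrongComp E x := mem_skel hC (hsx ▸ hmem s hs)
  have hwC : ∀ i ≤ m, w i ∈ C := by
    intro i hi
    rw [hCx]
    have h1 := hw.reach (Nat.zero_le i) hi
    have h2 := hw.reach hi le_rfl
    rw [hw.1] at h1
    rw [hw.2.1] at h2
    exact ⟨h1, h2⟩
  have key : ∀ i ≤ m, w i = c ((s + i) % l) := by
    intro i
    induction i with
    | zero => intro _; rw [hw.1, Nat.add_zero, Nat.mod_eq_of_lt hs, hsx]
    | succ i ih =>
      intro hi
      have e1 := hw.2.2 i (by omega)
      have e2 := hmod (s + i)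
      rw [← ih (by omega)] at e2
      exact single_out h e1 e2 (hwC i (by omega)) (hwC (i+1) hi) (hmem _ (Nat.mod_lt _ hl))
  have h1 := key m le_rfl
  rw [hw.2.1, ← hsx] at h1
  have h2 := hinj _ hs _ (Nat.mod_lt _ hl) h1
  have h3 : s + 0 ≡ s + m [MOD l] := by
    rw [Nat.add_zero]; unfold Nat.ModEq; rw [← h2, Nat.mod_eq_of_lt hs]
  exact (Nat.modEq_zero_iff_dvd).1 (Nat.ModEq.add_left_cancel' s h3).symm

theorem loop_of_edge {a b : V} (h : (a, b) ∈ E) (hr : StrongComp E a = StrongComp E b) :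
    (StrongComp E b, StrongComp E b) ∈ SkelEdges E :=
  ⟨⟨b, rfl⟩, ⟨b, rfl⟩, a, hr ▸ sc_self a, b, sc_self b, h⟩

/-- uniqueness of path length -/
theorem path_len {r : V} (hroot : ∀ e ∈ E, e.2 ≠ r)
    (F1 : ∀ {a b a' b' : V}, (a, b) ∈ E → (a', b') ∈ E → StrongComp E b' = StrongComp E b →
      StrongComp E a ≠ StrongComp E b → StrongComp E a' ≠ StrongComp E b → a = a' ∧ b = b')
    (F2 : ∀ {a a' b : V}, (a, b) ∈ E → (a', b) ∈ E → StrongComp E a = StrongComp E b →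
      StrongComp E a' = StrongComp E b → a = a') :
    ∀ (k k' : ℕ) (w w' : ℕ → V) (v : V), IsPath E k w r v → IsPath E k' w' r v → k = k' := by
  have hrs : ∀ v, Reachable E v r → v = r := by
    rintro v ⟨k, w, hw⟩
    rcases Nat.eq_zero_or_pos k with rfl | h0
    · rw [← hw.1, hw.2.1]
    · have := hw.2.2 (k - 1) (by omega)
      rw [Nat.sub_add_cancel h0, hw.2.1] at this
      exact absurd rfl (hroot _ this)
  have mixed : ∀ (k : ℕ) (w : ℕ → V) (v y : V), IsPath E (k + 1) w r v → (y, v) ∈ E →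
      StrongComp E (w k) = StrongComp E v → StrongComp E y ≠ StrongComp E v → False := by
    intro k w v y hw hy h1 h2
    have hlast : IsWalk E k w r (w k) := by
      have := hw.1.sub (Nat.zero_le k) (Nat.le_succ k)
      simpa [hw.1.1] using this
    have hrv : StrongComp E r ≠ StrongComp E v := by
      intro he
      have := hrs v (sc_eq_iff.1 he).2
      exact hroot _ hy this
    obtain ⟨t, ht, ha, hb⟩ := enter hlast (fun x => StrongComp E x = StrongComp E v) hrv h1
    have := (F1 hy (hlast.2.2 t ht) hb h2 ha).2
    have := hw.2 (t + 1) (by omega) (k + 1) le_rfl (by rw [← this, hw.1.2.1])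
    omega
  have trunc : ∀ (k : ℕ) (w : ℕ → V) (v : V), IsPath E (k + 1) w r v → IsPath E k w r (w k) := by
    intro k w v hw
    refine ⟨⟨hw.1.1, rfl, fun t ht => hw.1.2.2 t (by omega)⟩, fun s hs t ht => hw.2 s (by omega) t (by omega)⟩
  have edge : ∀ (k : ℕ) (w : ℕ → V) (v : V), IsPath E (k + 1) w r v → (w k, v) ∈ E := by
    intro k w v hw
    have := hw.1.2.2 k (by omega)
    rwa [hw.1.2.1] at this
  intro k
  induction k with
  | zero =>
    intro k' w w' v hw hw'
    rcases k' with _ | k'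
    · rfl
    · have := edge _ _ _ hw'
      have hv : v = r := by rw [← hw.1.1, hw.1.2.1]
      exact absurd hv (hroot _ this)
  | succ k ih =>
    intro k' w w' v hw hw'
    rcases k' with _ | k'
    · have := edge _ _ _ hw
      have hv : v = r := by rw [← hw'.1.1, hw'.1.2.1]
      exact absurd hv (hroot _ this)
    · have e1 := edge _ _ _ hw
      have e2 := edge _ _ _ hw'
      have heq : w k = w' k' := by
        by_cases h1 : StrongComp E (w k) = StrongComp E v
        · by_cases h2 : StrongComp E (w' k') = StrongComp E v
          · exact F2 e1 e2 h1 h2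
          · exact (mixed k w v _ hw e2 h1 h2).elim
        · by_cases h2 : StrongComp E (w' k') = StrongComp E v
          · exact (mixed k' w' v _ hw' e1 h2 h1).elim
          · exact (F1 e1 e2 rfl h1 h2).1
      have := ih k' w w' (w k) (trunc _ _ _ hw) (heq ▸ trunc _ _ _ hw')
      omega

end Aux

/-- Lemma 5 of the paper: in a reduced graph with nontrivial strong
components `G_1, …, G_q` (directed cycles of lengths `ℓ_1, …, ℓ_q`), for every `j`
with `j > n*` and `j > d_p − ℓ_p` for all `p`: (a) `V(j + L) = V(j)` where
`L = lcm(ℓ_1, …, ℓ_q)`; (b) `V⁺_cyc = V(j) ∪ … ∪ V(j + ℓ_max − 1)`; and (c) no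
`V(j + k)` is contained in the union of the others. -/
theorem stmt12 {n : ℕ} (hn : 1 ≤ n) (E : Set (Node n × Node n))
    (hred : ReducedGraph n E)
    (q : ℕ) (hq : 1 ≤ q) (Gp : Fin q → Set (Node n))
    (hGp : ∀ C : Set (Node n),
      (C ∈ SkelNodes E ∧ (C, C) ∈ SkelEdges E) ↔ ∃ p : Fin q, Gp p = C)
    (hGpinj : Function.Injective Gp)
    (l : Fin q → ℕ) (c : Fin q → ℕ → Node n) (u0 : Fin q → Node n)
    (hu0 : ∀ p, u0 p ∈ Gp p)
    (hcyc : ∀ p, IsCycle E (l p) (c p) (u0 p))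
    (hcycset : ∀ p, {x | ∃ t < l p, c p t = x} = Gp p)
    (dep : Node n → ℕ)
    (hdep : ∀ v : Node n, ∃ pth : ℕ → Node n, IsPath E (dep v) pth (none : Node n) v)
    (dps : Fin q → ℕ)
    (hdps : ∀ p, IsGreatest {d : ℕ | ∃ v ∈ VpPlus E (Gp p), dep v = d} (dps p))
    (lmax : ℕ) (hlmax : IsGreatest (Set.range l) lmax)
    (L : ℕ) (hL : L = Finset.univ.lcm l)
    (nstar : ℕ) (hnstar : nstar = ((CoreNodes n E) \ {(none : Node n)}).ncard)
    (j : ℕ) (hjn : nstar < j) (hjd : ∀ p, (dps p : ℤ) - (l p : ℤ) < (j : ℤ)) :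
    VSet E (j + L) = VSet E j ∧
    CycSucc E = {v : Node n | ∃ k < lmax, v ∈ VSet E (j + k)} ∧
    ∀ k < lmax, ∃ v ∈ VSet E (j + k),
      ∀ k' < lmax, k' ≠ k → v ∉ VSet E (j + k') := by
  obtain ⟨⟨hroot, -⟩, htree, -, huniq, hsing⟩ := hred
  have F1 : ∀ {a b a' b' : Node n}, (a, b) ∈ E → (a', b') ∈ E →
      StrongComp E b' = StrongComp E b →
      StrongComp E a ≠ StrongComp E b → StrongComp E a' ≠ StrongComp E b → a = a' ∧ b = b' :=
    fun h h' hb ha ha' => f1 htree huniq h h' hb ha ha'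
  have F2 : ∀ {a a' b : Node n}, (a, b) ∈ E → (a', b) ∈ E → StrongComp E a = StrongComp E b →
      StrongComp E a' = StrongComp E b → a = a' := by
    intro a a' b h h' ha ha'
    exact single_in (hsing _ (loop_of_edge h ha)).2 h h' (ha ▸ sc_self a) (ha' ▸ sc_self a')
      (sc_self b)
  have hplen := path_len (r := (none : Node n)) hroot F1 F2
  have hGs : ∀ p, Gp p ∈ SkelNodes E ∧ (Gp p, Gp p) ∈ SkelEdges E := fun p => (hGp _).2 ⟨p, rfl⟩
  have hl1 : ∀ p, 1 ≤ l p := fun p => (hcyc p).1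
  -- closed walk puts node into some component
  have hclosed : ∀ {m : ℕ} {x : Node n}, 1 ≤ m → Wk E m x x → ∃ p, x ∈ Gp p := by
    rintro m x hm ⟨w, hw⟩
    have h1 := hw.reach (s := 0) (t := 1) (by omega) hm
    have h2 := hw.reach (s := 1) (t := m) hm le_rfl
    rw [hw.1] at h1
    rw [hw.2.1] at h2
    have h3 := hw.2.2 0 (by omega)
    rw [hw.1] at h3
    have h4 : StrongComp E (w 1) = StrongComp E x := sc_eq_iff.2 ⟨h2, h1⟩
    have := loop_of_edge h3 h4.symm
    rw [h4] at this
    obtain ⟨p, hp⟩ := (hGp _).1 ⟨⟨x, rfl⟩, this⟩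
    exact ⟨p, hp ▸ sc_self x⟩
  have hGc : ∀ p, ∀ x ∈ Gp p, Wk E (l p) x x := by
    intro p x hx
    rw [← hcycset p] at hx
    obtain ⟨t, ht, rfl⟩ := hx
    have hw := (hcyc p).2.1
    have a1 : Wk E (t - 0) _ _ := ⟨_, hw.sub (Nat.zero_le t) ht.le⟩
    have a2 : Wk E (l p - t) _ _ := ⟨_, hw.sub ht.le le_rfl⟩
    rw [hw.1] at a1
    rw [hw.2.1] at a2
    have := a2.add a1
    rwa [show l p - t + (t - 0) = l p by omega] at this
  have hcyc_iff : ∀ v, v ∈ CycSucc E ↔ ∃ p, v ∈ VpPlus E (Gp p) := by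
    intro v
    constructor
    · rintro ⟨u, ⟨k, w, hk, hw, -⟩, hr⟩
      obtain ⟨p, hp⟩ := hclosed hk ⟨w, hw⟩
      exact ⟨p, u, hp, hr⟩
    · rintro ⟨p, u, hu, hr⟩
      refine ⟨u0 p, ⟨_, _, hcyc p⟩, Reachable.trans' ?_ hr⟩
      have e := mem_skel (hGs p).1 (hu0 p)
      rw [e] at hu
      exact hu.1
  have hrs : ∀ v, Reachable E v none → v = (none : Node n) := by
    rintro v ⟨k, w, hw⟩
    rcases Nat.eq_zero_or_pos k with rfl | h0
    · rw [← hw.1, hw.2.1]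
    · have := hw.2.2 (k - 1) (by omega)
      rw [Nat.sub_add_cancel h0, hw.2.1] at this
      exact absurd rfl (hroot _ this)
  have hnone : ∀ p, (none : Node n) ∉ VpPlus E (Gp p) := by
    rintro p ⟨u, hu, hr⟩
    obtain rfl := hrs u hr
    obtain ⟨w, hw⟩ := hGc p _ hu
    have := hw.2.2 (l p - 1) (by have := hl1 p; omega)
    rw [Nat.sub_add_cancel (hl1 p), hw.2.1] at this
    exact absurd rfl (hroot _ this)
  -- (D)
  have hD : ∀ p k w v, IsWalk E k w (none : Node n) v → v ∈ VpPlus E (Gp p) →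
      ∃ t ≤ k, w t ∈ Gp p := by
    intro p k w v hw hv
    obtain ⟨t, ht, ha, hb⟩ := enter hw (fun x => x ∈ VpPlus E (Gp p)) (hnone p) hv
    refine ⟨t + 1, ht, ?_⟩
    by_contra hnb
    obtain ⟨u, hu, m, w', hw'⟩ := hb
    have hne : StrongComp E u ≠ StrongComp E (w (t+1)) := by
      intro he
      apply hnb
      rw [mem_skel (hGs p).1 hu, he]
      exact sc_self _
    obtain ⟨t', ht', ha', hb'⟩ := enter hw' (fun x => StrongComp E x = StrongComp E (w (t+1))) hne rfl
    have hup : w' t' ∈ VpPlus E (Gp p) := by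
      refine ⟨u, hu, ?_⟩
      have := hw'.reach (Nat.zero_le t') ht'.le
      rwa [hw'.1] at this
    have hne2 : StrongComp E (w t) ≠ StrongComp E (w (t+1)) := by
      intro he
      exact ha ⟨u, hu, Reachable.trans' ⟨m, w', hw'⟩ (sc_eq_iff.1 he).2⟩
    have := (F1 (hw.2.2 t ht) (hw'.2.2 t' ht') hb' hne2 ha').1
    exact ha (this ▸ hup)
  -- (A)
  have hA0 : ∀ p p' x y, x ∈ Gp p → y ∈ Gp p' → Reachable E x y → p = p' := by
    rintro p p' x y hx hy ⟨k, w, hw⟩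
    by_contra hpp
    have ey := mem_skel (hGs p').1 hy
    have ex := mem_skel (hGs p).1 hx
    have hne : StrongComp E x ≠ StrongComp E y := by
      rw [← ex, ← ey]; exact fun h => hpp (hGpinj h)
    obtain ⟨t, ht, ha, hb⟩ := enter hw (fun z => StrongComp E z = StrongComp E y) hne rfl
    obtain ⟨⟨C', ⟨hC's, hC'⟩, -, -, a, haC, b, hbC, hab⟩, -⟩ := hsing _ (hGs p').2
    simp only at haC hbC
    have hC'a := mem_skel hC's haC
    rw [hC'a] at hC'
    have haco := skel_core hC'
    have hbe : StrongComp E b = StrongComp E y := by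
      rw [ey] at hbC; exact sc_eq hbC
    have hane : StrongComp E a ≠ StrongComp E y := by
      intro he
      exact haco ((hcyc_iff a).2 ⟨p', y, hy, (sc_eq_iff.1 he).2⟩)
    have := (F1 hab (hw.2.2 t ht) (hb.trans hbe.symm) (hbe ▸ hane) (hbe ▸ ha)).1
    apply haco
    rw [this]
    refine (hcyc_iff _).2 ⟨p, x, hx, ?_⟩
    have := hw.reach (Nat.zero_le t) ht.le
    rwa [hw.1] at this
  have hA : ∀ p p' v, v ∈ VpPlus E (Gp p) → v ∈ VpPlus E (Gp p') → p = p' := by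
    intro p p' v hv hv'
    obtain ⟨w, hw, -⟩ := hdep v
    obtain ⟨s, hs, hs'⟩ := hD p _ w v hw hv
    obtain ⟨t, ht, ht'⟩ := hD p' _ w v hw hv'
    rcases le_total s t with h | h
    · exact hA0 _ _ _ _ hs' ht' (hw.reach h ht)
    · exact (hA0 _ _ _ _ ht' hs' (hw.reach h hs)).symm
  -- walk lengths
  have hlen1 : ∀ p v, v ∈ VpPlus E (Gp p) → ∀ m, Wk E (dep v + m * l p) none v := by
    intro p v hv m
    obtain ⟨w, hw, -⟩ := hdep v
    obtain ⟨t, ht, ht'⟩ := hD p _ w v hw hv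
    have a1 : Wk E (t - 0) _ _ := ⟨_, hw.sub (Nat.zero_le t) ht⟩
    have a2 : Wk E (dep v - t) _ _ := ⟨_, hw.sub ht le_rfl⟩
    rw [hw.1] at a1
    rw [hw.2.1] at a2
    have a3 : Wk E (m * l p) (w t) (w t) := by
      induction m with
      | zero => rw [Nat.zero_mul]; exact Wk.zero _
      | succ m ih => rw [Nat.succ_mul]; exact ih.add (hGc p _ ht')
    have := (a1.add a3).add a2
    rwa [show t - 0 + m * l p + (dep v - t) = dep v + m * l p by omega] at this
  have hlen2 : ∀ p v, v ∈ VpPlus E (Gp p) → ∀ k, Wk E k none v → ∃ m, k = dep v + m * l p := by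
    intro p v hv k
    induction k using Nat.strong_induction_on with
    | _ k ih =>
      rintro ⟨w, hw⟩
      by_cases hp : ∀ s ≤ k, ∀ t ≤ k, w s = w t → s = t
      · obtain ⟨w', hw'⟩ := hdep v
        exact ⟨0, by rw [hplen _ _ _ _ _ (⟨hw, hp⟩ : IsPath E k w none v) hw']; simp⟩
      · have : ∃ s t, s < t ∧ t ≤ k ∧ w s = w t := by
          push Not at hp
          obtain ⟨s, hs, t, ht, he, hne⟩ := hp
          rcases lt_or_gt_of_ne hne with h | h
          · exact ⟨s, t, h, ht, he⟩
          · exact ⟨t, s, h, hs, he.symm⟩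
        obtain ⟨s, t, hst, ht, he⟩ := this
        have b := hw.sub hst.le ht
        rw [← he] at b
        obtain ⟨p', hp'⟩ := hclosed (by omega) ⟨_, b⟩
        have hv' : v ∈ VpPlus E (Gp p') := by
          refine ⟨w s, hp', ?_⟩
          have := hw.reach (s := s) (t := k) (by omega) le_rfl
          rwa [hw.2.1] at this
        obtain rfl := hA _ _ _ hv hv'
        obtain ⟨d, hd⟩ := closed_dvd (hGs p).1 (hsing _ (hGs p).2).2 (hcyc p) (hcycset p) hp' b
        have a1 : Wk E (s - 0) _ _ := ⟨_, hw.sub (Nat.zero_le s) (by omega)⟩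
        have a2 : Wk E (k - t) _ _ := ⟨_, hw.sub ht le_rfl⟩
        rw [hw.1] at a1
        rw [hw.2.1, ← he] at a2
        obtain ⟨m, hm⟩ := ih _ (by omega) (a1.add a2)
        refine ⟨m + d, ?_⟩
        rw [Nat.add_mul, Nat.mul_comm d, ← hd]
        omega
  have hVlen : ∀ p v, v ∈ VpPlus E (Gp p) → ∀ k, j ≤ k →
      (v ∈ VSet E k ↔ k ≡ dep v [MOD l p]) := by
    intro p v hv k hk
    constructor
    · intro h
      obtain ⟨m, rfl⟩ := hlen2 p v hv k h
      simp [Nat.ModEq]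
    · intro h
      have h1 : dep v ≤ dps p := (hdps p).2 ⟨v, hv, rfl⟩
      have h2 := hjd p
      have h3 : dep v ≤ k := by
        by_contra hc
        push Not at hc
        obtain ⟨d, hd⟩ := (Nat.modEq_iff_dvd' hc.le).1 h
        rcases Nat.eq_zero_or_pos d with rfl | hd0
        · omega
        · have : l p * 1 ≤ l p * d := Nat.mul_le_mul_left _ hd0
          omega
      obtain ⟨d, hd⟩ := (Nat.modEq_iff_dvd' h3).1 h.symm
      have := hlen1 p v hv d
      rw [Nat.mul_comm, ← hd, Nat.add_sub_cancel' h3] at this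
      exact this
  -- V(k) for k > n*
  have hVcyc : ∀ k, j ≤ k → ∀ v ∈ VSet E k, v ∈ CycSucc E := by
    rintro k hk v ⟨w, hw⟩
    by_contra hv
    have hcore : ∀ t ≤ k, w t ∉ CycSucc E := by
      rintro t ht ⟨u, hu, hr⟩
      apply hv
      refine ⟨u, hu, hr.trans' ?_⟩
      have := hw.reach ht le_rfl
      rwa [hw.2.1] at this
    have hne : ∀ s t, s < t → t ≤ k → w s ≠ w t := by
      intro s t hst ht he
      have b := hw.sub hst.le ht
      rw [← he] at b
      obtain ⟨p, hp⟩ := hclosed (by omega) ⟨_, b⟩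
      exact hcore s (by omega) ((hcyc_iff _).2 ⟨p, _, hp, Reachable.rfl' _⟩)
    have hsub : (fun i => w (i + 1)) '' (Set.Iio k) ⊆ (CoreNodes n E) \ {(none : Node n)} := by
      rintro _ ⟨i, hi, rfl⟩
      have hi : i < k := hi
      refine ⟨⟨trivial, hcore (i + 1) (by omega)⟩, ?_⟩
      exact hroot _ (hw.2.2 i hi)
    have hcard := Set.ncard_le_ncard hsub (Set.toFinite _)
    rw [Set.ncard_image_of_injOn, ← hnstar] at hcard
    · have : (Set.Iio k).ncard = k := by
        rw [← Finset.coe_Iio, Set.ncard_coe_finset]; simp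
      omega
    · intro a ha b hb he
      have ha : a < k := ha
      have hb : b < k := hb
      rcases lt_trichotomy a b with h | h | h
      · exact absurd he (hne _ _ (by omega) (by omega))
      · exact h
      · exact absurd he.symm (hne _ _ (by omega) (by omega))
  obtain ⟨⟨pm, hpm⟩, hle⟩ := hlmax
  have hle' : ∀ p, l p ≤ lmax := fun p => hle ⟨p, rfl⟩
  refine ⟨?_, ?_, ?_⟩
  · ext v
    have main : ∀ p, v ∈ VpPlus E (Gp p) → (v ∈ VSet E (j + L) ↔ v ∈ VSet E j) := by
      intro p hp
      rw [hVlen p v hp _ (by omega), hVlen p v hp _ le_rfl]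
      have hd : l p ∣ L := hL ▸ Finset.dvd_lcm (Finset.mem_univ p)
      have : j + L ≡ j [MOD l p] := by
        have := (Nat.modEq_zero_iff_dvd.2 hd).add_left j
        simpa using this
      exact ⟨fun h => this.symm.trans h, fun h => this.trans h⟩
    constructor
    · intro h
      obtain ⟨p, hp⟩ := (hcyc_iff v).1 (hVcyc _ (by omega) v h)
      exact (main p hp).1 h
    · intro h
      obtain ⟨p, hp⟩ := (hcyc_iff v).1 (hVcyc _ le_rfl v h)
      exact (main p hp).2 h
  · ext v
    constructor
    · intro h
      obtain ⟨p, hp⟩ := (hcyc_iff v).1 h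
      -- choose k
      refine ⟨(dep v + (l p - 1) * j) % l p, lt_of_lt_of_le (Nat.mod_lt _ (hl1 p)) (hle' p), ?_⟩
      rw [hVlen p v hp _ (by omega)]
      have h1 : j + (dep v + (l p - 1) * j) % l p ≡ j + (dep v + (l p - 1) * j) [MOD l p] :=
        (Nat.mod_modEq _ _).add_left j
      refine h1.trans ?_
      have h2 : j + (dep v + (l p - 1) * j) = dep v + l p * j := by
        obtain ⟨e, he⟩ : ∃ e, l p = e + 1 := ⟨l p - 1, by have := hl1 p; omega⟩
        rw [he, Nat.add_sub_cancel]; ring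
      rw [h2]
      simp [Nat.ModEq]
    · rintro ⟨k, hk, h⟩
      exact hVcyc _ (by omega) v h
  · intro k hk
    subst hpm
    have hpos := hl1 pm
    -- find a node on the cycle
    obtain ⟨e, he⟩ : ∃ e, l pm = e + 1 := ⟨l pm - 1, by omega⟩
    set d := dep (u0 pm) with hd
    set t := (j + k + e * d) % l pm with ht
    have htl : t < l pm := Nat.mod_lt _ hpos
    have hmem : c pm t ∈ Gp pm := by rw [← hcycset pm]; exact ⟨t, htl, rfl⟩
    have hv : c pm t ∈ VpPlus E (Gp pm) := ⟨_, hmem, Reachable.rfl' _⟩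
    have hw0 : Wk E d none (u0 pm) := by
      obtain ⟨w, hw, -⟩ := hdep (u0 pm)
      exact ⟨w, hw⟩
    have hw1 : Wk E (t - 0) (u0 pm) (c pm t) := by
      have hw := (hcyc pm).2.1
      have := hw.sub (Nat.zero_le t) htl.le
      rw [hw.1] at this
      exact ⟨_, this⟩
    obtain ⟨m, hm⟩ := hlen2 pm _ hv _ (hw0.add hw1)
    have hmod : dep (c pm t) ≡ j + k [MOD l pm] := by
      have h1 : dep (c pm t) ≡ d + t [MOD l pm] := by
        rw [Nat.sub_zero] at hm
        rw [hm]; simp [Nat.ModEq]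
      have h2 : d + t ≡ d + (j + k + e * d) [MOD l pm] := (Nat.mod_modEq _ _).add_left d
      have h3 : d + (j + k + e * d) = j + k + l pm * d := by rw [he]; ring
      refine (h1.trans h2).trans ?_
      rw [h3]; simp [Nat.ModEq]
    refine ⟨c pm t, (hVlen pm _ hv _ (by omega)).2 hmod.symm, ?_⟩
    intro k' hk' hne hc
    have h4 := (hVlen pm _ hv _ (by omega)).1 hc
    have h5 := Nat.ModEq.add_left_cancel' j (h4.trans hmod)
    exact hne (Nat.ModEq.eq_of_lt_of_lt h5 hk' hk)
end

section
/- Let n ≥ 1, let G = (V, E) ∈ 𝒢_{n,1} be reduced, let Σ be a topological space with a Borel probability measure μ, let f : Σ → ℝ be a bounded continuous function with f ≥ 0, and let ν : E → ℝ assign a nonnegative real to each edge. Define bounded continuous A : Σ → (n × n real matrices) and b : Σ → ℝⁿ by A(σ)_{ij} = f(σ)^{ν((α_j, α_i))} if (α_j, α_i) ∈ E and 0 otherwise, and b(σ)_i = f(σ)^{ν((β, α_i))} if (β, α_i) ∈ E and 0 otherwise. For a walk τ = v_0, v_1, …, v_k set ν(τ) := Σ_{t=0}^{k−1} ν((v_t,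 v_{t+1})). Then for every j ≥ 1 and every i ∈ {1, …, n}: if α_i ∈ V(j), the i-th entry of ∫_Σ A(σ)^{j−1} b(σ) dμ(σ) equals ∫_Σ f(σ)^{ν(τ)} dμ(σ), where τ is the unique walk of length j from β to α_i; and it equals 0 if α_i ∉ V(j). -/
open MeasureTheory

section Helpers

theorem walk_snoc {V : Type*} {E : Set (V × V)} {k : ℕ} {w : ℕ → V} {u v x : V}
    (h : IsWalk E k w u v) (e : (v, x) ∈ E) :
    IsWalk E (k + 1) (fun t => if t ≤ k then w t else x) u x := by
  obtain ⟨h0, hk, hs⟩ := h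
  refine ⟨by simp [h0], by simp, ?_⟩
  intro t ht
  rcases Nat.lt_or_ge t k with h1 | h1
  · have h2 : t ≤ k := h1.le
    have h3 : t + 1 ≤ k := h1
    simp only [h2, h3, if_true]
    exact hs t h1
  · have h2 : t = k := by omega
    subst h2
    simp [hk, e]

theorem walk_pre {V : Type*} {E : Set (V × V)} {k s : ℕ} {w : ℕ → V} {u v : V}
    (h : IsWalk E k w u v) (hs : s ≤ k) : IsWalk E s w u (w s) :=
  ⟨h.1, rfl, fun t ht => h.2.2 t (by omega)⟩

theorem reach_iff {V : Type*} {E : Set (V × V)} {u v : V} :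
    Reachable E u v ↔ Relation.ReflTransGen (fun a b => (a, b) ∈ E) u v := by
  constructor
  · rintro ⟨k, w, h⟩
    induction k generalizing v with
    | zero => obtain ⟨h0, hk, _⟩ := h; rw [← h0, ← hk]
    | succ k ih =>
      have h1 := ih (walk_pre h (Nat.le_succ k))
      have h2 := h.2.2 k (Nat.lt_succ_self k)
      rw [h.2.1] at h2
      exact h1.tail h2
  · intro h
    induction h with
    | refl => exact ⟨0, fun _ => u, rfl, rfl, by simp⟩
    | tail _ e ih =>
      obtain ⟨k, w, h⟩ := ih
      exact ⟨k + 1, _, walk_snoc h e⟩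

theorem reach_refl {V : Type*} {E : Set (V × V)} (u : V) : Reachable E u u :=
  reach_iff.2 .refl

theorem reach_trans {V : Type*} {E : Set (V × V)} {u v x : V}
    (h : Reachable E u v) (h' : Reachable E v x) : Reachable E u x :=
  reach_iff.2 ((reach_iff.1 h).trans (reach_iff.1 h'))

theorem reach_edge {V : Type*} {E : Set (V × V)} {u v : V}
    (h : (u, v) ∈ E) : Reachable E u v :=
  reach_iff.2 (.single h)

theorem mem_comp_self {V : Type*} {E : Set (V × V)} (u : V) : u ∈ StrongComp E u :=
  ⟨reach_refl u, reach_refl u⟩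

theorem comp_eq {V : Type*} {E : Set (V × V)} {u v : V} (h : u ∈ StrongComp E v) :
    StrongComp E u = StrongComp E v := by
  ext x
  exact ⟨fun g => ⟨reach_trans h.1 g.1, reach_trans g.2 h.2⟩,
    fun g => ⟨reach_trans h.2 g.1, reach_trans g.2 h.1⟩⟩

theorem skel_edge {V : Type*} {E : Set (V × V)} {u v : V} (h : (u, v) ∈ E) :
    (StrongComp E u, StrongComp E v) ∈ SkelEdges E :=
  ⟨⟨u, rfl⟩, ⟨v, rfl⟩, u, mem_comp_self u, v, mem_comp_self v, h⟩

theorem skel_reach_s14 {V : Type*} {E : Set (V × V)} {u v : V} (h : Reachable E u v) :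
    Reachable (SkelEdges E) (StrongComp E u) (StrongComp E v) := by
  rw [reach_iff] at h ⊢
  induction h with
  | refl => exact .refl
  | tail _ e ih => exact ih.tail (skel_edge e)

theorem reach_of_skel {V : Type*} {E : Set (V × V)} {C D : Set V}
    (h : Reachable (SkelEdges E) C D) {a b : V} (ha : a ∈ C) (hb : b ∈ D)
    (hC : C = StrongComp E a) : Reachable E a b := by
  rw [reach_iff] at h
  induction h generalizing b with
  | refl => rw [hC] at hb; exact hb.1
  | tail _ e ih =>
    obtain ⟨_, ⟨d, hd⟩, x, hx, y, hy, hxy⟩ := e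
    simp only at hd hx hy
    rw [hd] at hb hy
    exact reach_trans (ih hx) (reach_trans (reach_edge hxy) (reach_trans hy.2 hb.1))

variable {n : ℕ} {E : Set (Node n × Node n)}

theorem reach_sub {V : Type*} {E F : Set (V × V)} (hEF : E ⊆ F) {u v : V}
    (h : Reachable E u v) : Reachable F u v := by
  obtain ⟨k, w, h0, hk, hs⟩ := h
  exact ⟨k, w, h0, hk, fun t ht => hEF (hs t ht)⟩

/-- The edge entering a component from outside is unique. -/
theorem entry_unique (hred : ReducedGraph n E) {u v u' v' : Node n}
    (e : (u, v) ∈ E) (e' : (u', v') ∈ E) (hv : v' ∈ StrongComp E v)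
    (hu : u ∉ StrongComp E v) (hu' : u' ∉ StrongComp E v) : u = u' ∧ v = v' := by
  obtain ⟨_, ⟨r, hr, hup, _⟩, _, huniq, _⟩ := hred
  have hcv := comp_eq hv
  -- path to comp of an outside predecessor extends
  have ext : ∀ a c : Node n, (a, c) ∈ E → c ∈ StrongComp E v → a ∉ StrongComp E v →
      ∃ (k : ℕ) (w : ℕ → Set (Node n)),
        IsPath {p ∈ SkelEdges E | p.1 ≠ p.2} (k + 1) w r (StrongComp E v) ∧
        w k = StrongComp E a := by
    intro a c hac hc ha
    obtain ⟨k, w, hw, hinj⟩ := (hup (StrongComp E a) ⟨a, rfl⟩).1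
    have hne : StrongComp E a ≠ StrongComp E v := fun h => ha (h ▸ mem_comp_self a)
    have hedge : (StrongComp E a, StrongComp E v) ∈
        {p ∈ SkelEdges E | p.1 ≠ p.2} := ⟨comp_eq hc ▸ skel_edge hac, hne⟩
    have hnv : ∀ s ≤ k, w s ≠ StrongComp E v := by
      intro s hs hsv
      have h1 : Reachable (SkelEdges E) (w s) (StrongComp E a) := by
        refine reach_sub (E := {p ∈ SkelEdges E | p.1 ≠ p.2}) (fun p hp => hp.1) ?_
        refine ⟨k - s, fun t => w (s + t), rfl, ?_, fun t ht => ?_⟩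
        · show w (s + (k - s)) = _
          rw [show s + (k - s) = k by omega]; exact hw.2.1
        · exact hw.2.2 (s + t) (by omega)
      rw [hsv] at h1
      have h2 := reach_of_skel h1 (mem_comp_self v) (mem_comp_self a) rfl
      exact ha ⟨h2, reach_trans (reach_edge hac) hc.2⟩
    refine ⟨k, _, ⟨walk_snoc hw hedge, ?_⟩, by simpa using hw.2.1⟩
    intro s hs t ht hst
    by_cases h1 : s ≤ k <;> by_cases h2 : t ≤ k <;> simp only [h1, h2, if_true, if_false] at hst
    · exact hinj s h1 t h2 hst
    · exact absurd hst (hnv s h1)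
    · exact absurd hst.symm (hnv t h2)
    · omega
  obtain ⟨k, w, hw, hwk⟩ := ext u v e (mem_comp_self v) hu
  obtain ⟨k', w', hw', hwk'⟩ := ext u' v' e' hv hu'
  obtain ⟨hk, hww⟩ := (hup (StrongComp E v) ⟨v, rfl⟩).2 _ _ _ _ hw hw'
  have hkk : k = k' := by omega
  subst hkk
  have hcu : StrongComp E u = StrongComp E u' := by
    rw [← hwk, ← hwk']; exact hww k (Nat.le_succ k)
  have hne : StrongComp E u ≠ StrongComp E v := fun h => hu (h ▸ mem_comp_self u)
  obtain ⟨x, _, hx⟩ := huniq _ (skel_edge e) hne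
  have h1 := hx (u, v) ⟨e, mem_comp_self u, mem_comp_self v⟩
  have h2 := hx (u', v') ⟨e', hcu ▸ mem_comp_self u', hv⟩
  have h3 := h1.trans h2.symm
  exact ⟨congrArg Prod.fst h3, congrArg Prod.snd h3⟩

theorem skel_loop {V : Type*} {E : Set (V × V)} {u v : V} (e : (u, v) ∈ E) (h : Reachable E v u) :
    (StrongComp E v, StrongComp E v) ∈ SkelEdges E :=
  ⟨⟨v, rfl⟩, ⟨v, rfl⟩, u, ⟨h, reach_edge e⟩, v, mem_comp_self v, e⟩

theorem onCycle_loop {V : Type*} {E : Set (V × V)} {u : V} (e : (u, u) ∈ E) : OnCycle E u :=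
  ⟨1, fun _ => u, le_refl _, ⟨rfl, rfl, fun _ _ => e⟩, by intros; omega⟩

theorem cycle_pred_unique (hred : ReducedGraph n E) {u u' v : Node n}
    (e : (u, v) ∈ E) (e' : (u', v) ∈ E) (h : u ∈ StrongComp E v) (h' : u' ∈ StrongComp E v) :
    u = u' := by
  obtain ⟨_, _, _, _, h5⟩ := hred
  obtain ⟨_, l, w, hl, hinj, _, hw⟩ := h5 _ (skel_loop e h.1)
  obtain ⟨t, ht, hte⟩ := (hw (u, v)).1 ⟨e, h, mem_comp_self v⟩
  obtain ⟨s, hs, hse⟩ := (hw (u', v)).1 ⟨e', h', mem_comp_self v⟩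
  simp only [Prod.mk.injEq] at hte hse
  have h1 := hinj _ (Nat.mod_lt _ hl) _ (Nat.mod_lt _ hl) (hte.2.symm.trans hse.2)
  have h2 : t = s := by
    have h3 : t ≡ s [MOD l] := Nat.ModEq.add_right_cancel' 1 h1
    rwa [Nat.ModEq, Nat.mod_eq_of_lt ht, Nat.mod_eq_of_lt hs] at h3
  rw [hte.1, hse.1, h2]

/-- The outside predecessor of a cycle has no cycle above it. -/
theorem entry_acyclic (hred : ReducedGraph n E) {u u' v : Node n}
    (e : (u, v) ∈ E) (hu : u ∉ StrongComp E v) (e' : (u', v) ∈ E) (hu' : u' ∈ StrongComp E v)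
    {x y : Node n} (exy : (x, y) ∈ E) (hyx : Reachable E y x) (hxu : Reachable E x u) : False := by
  have hred' := hred
  obtain ⟨_, _, _, _, h5⟩ := hred'
  have hloop := skel_loop e' hu'.1
  obtain ⟨⟨C, hC, hCe⟩, _⟩ := h5 _ hloop
  obtain ⟨_, _, a, ha, a', ha', haa⟩ := hCe
  simp only at ha ha'
  obtain ⟨⟨c, rfl⟩, hcyc⟩ := hC
  have hav : a ∉ StrongComp E v := by
    intro h
    apply hcyc
    refine ⟨StrongComp E v, onCycle_loop hloop, ?_⟩
    rw [← comp_eq ha, comp_eq h]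
    exact reach_refl _
  obtain ⟨h1, _⟩ := entry_unique hred e haa ha' hu hav
  subst h1
  apply hcyc
  refine ⟨StrongComp E y, onCycle_loop (skel_loop exy hyx), ?_⟩
  rw [← comp_eq ha]
  exact skel_reach_s14 (reach_trans hyx hxu)

theorem acyclic_len (hred : ReducedGraph n E) (k : ℕ) : ∀ (k' : ℕ) (w w' : ℕ → Node n) (v : Node n),
    (∀ x y, (x, y) ∈ E → Reachable E y x → ¬ Reachable E x v) →
    IsWalk E k w none v → IsWalk E k' w' none v → k = k' := by
  have hnone := hred.1.1
  induction k with
  | zero =>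
    intro k' w w' v _ hw hw'
    rcases k' with _ | k'
    · rfl
    · have h1 := hw'.2.2 k' (Nat.lt_succ_self _)
      have h2 := hnone _ h1
      exact absurd (hw'.2.1.trans (hw.2.1.symm.trans hw.1)) h2
  | succ k ih =>
    intro k' w w' v hv hw hw'
    have h1 := hw.2.2 k (Nat.lt_succ_self _)
    rcases k' with _ | k'
    · have h2 := hnone _ h1
      exact absurd (hw.2.1.trans (hw'.2.1.symm.trans hw'.1)) h2
    · have h1' := hw'.2.2 k' (Nat.lt_succ_self _)
      rw [hw.2.1] at h1
      rw [hw'.2.1] at h1'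
      have n1 : w k ∉ StrongComp E v := fun h => hv _ _ h1 h.1 h.2
      have n2 : w' k' ∉ StrongComp E v := fun h => hv _ _ h1' h.1 h.2
      obtain ⟨h3, _⟩ := entry_unique hred h1 h1' (mem_comp_self v) n1 n2
      have hp := walk_pre hw (Nat.le_succ k)
      have hp' := walk_pre hw' (Nat.le_succ k')
      rw [← h3] at hp'
      rw [ih k' w w' (w k) (fun x y exy hyx hx =>
        hv x y exy hyx (reach_trans hx (reach_edge h1))) hp hp']

/-- no walk of length `j` can end both through the entry edge and through the cycle. -/
theorem mixed_false (hred : ReducedGraph n E) {j : ℕ} {w w' : ℕ → Node n} {u u' v : Node n}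
    (hw : IsWalk E j w none u) (hw' : IsWalk E j w' none u')
    (e : (u, v) ∈ E) (hu : u ∉ StrongComp E v) (e' : (u', v) ∈ E) (hu' : u' ∈ StrongComp E v) :
    False := by
  classical
  have hnone := hred.1.1
  have hb : (none : Node n) ∉ StrongComp E v := by
    rintro ⟨h, _⟩
    rw [reach_iff] at h
    rcases Relation.ReflTransGen.cases_tail h with h | ⟨c, _, hc⟩
    · exact hnone _ e h.symm
    · exact hnone _ hc rfl
  have hex : ∃ t, w' t ∈ StrongComp E v := ⟨j, by rw [hw'.2.1]; exact hu'⟩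
  have hspec := Nat.find_spec hex
  have hle : Nat.find hex ≤ j := Nat.find_min' hex (by rw [hw'.2.1]; exact hu')
  obtain ⟨s, hs⟩ : ∃ s, Nat.find hex = s + 1 := by
    rcases h : Nat.find hex with _ | s
    · rw [h, hw'.1] at hspec; exact absurd hspec hb
    · exact ⟨s, rfl⟩
  have hmin : w' s ∉ StrongComp E v := Nat.find_min hex (by omega)
  rw [hs] at hspec hle
  obtain ⟨h1, _⟩ := entry_unique hred e (hw'.2.2 s (by omega)) hspec hu hmin
  have hp := walk_pre hw' (show s ≤ j by omega)
  rw [← h1] at hp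
  have := acyclic_len hred j s w w' u
    (fun x y exy hyx hx => entry_acyclic hred e hu e' hu' exy hyx hx) hw hp
  omega

theorem pred_unique (hred : ReducedGraph n E) {j : ℕ} {w w' : ℕ → Node n} {u u' v : Node n}
    (hw : IsWalk E j w none u) (hw' : IsWalk E j w' none u')
    (e : (u, v) ∈ E) (e' : (u', v) ∈ E) : u = u' := by
  by_cases h : u ∈ StrongComp E v <;> by_cases h' : u' ∈ StrongComp E v
  · exact cycle_pred_unique hred e e' h h'
  · exact (mixed_false hred hw' hw e' h' e h).elim
  · exact (mixed_false hred hw hw' e h e' h').elim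
  · exact (entry_unique hred e e' (mem_comp_self v) h h').1

theorem entry_formula (hred : ReducedGraph n E) {x : ℝ} (hx : 0 ≤ x)
    (ν : Node n × Node n → ℝ) (hν : ∀ e ∈ E, 0 ≤ ν e)
    (A : Fin n → Fin n → ℝ) (b : Fin n → ℝ)
    (hA : ∀ (i j : Fin n),
      (((some j : Node n), (some i : Node n)) ∈ E →
          A i j = x ^ ν ((some j : Node n), (some i : Node n))) ∧
      (((some j : Node n), (some i : Node n)) ∉ E → A i j = 0))
    (hb : ∀ (i : Fin n),
      (((none : Node n), (some i : Node n)) ∈ E →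
          b i = x ^ ν ((none : Node n), (some i : Node n))) ∧
      (((none : Node n), (some i : Node n)) ∉ E → b i = 0)) (k : ℕ) : ∀ i : Fin n,
      (∀ w : ℕ → Node n, IsWalk E (k + 1) w (none : Node n) (some i) →
        ((Matrix.of A ^ k).mulVec b) i
          = x ^ (∑ t ∈ Finset.range (k + 1), ν (w t, w (t + 1)))) ∧
      ((¬ ∃ w : ℕ → Node n, IsWalk E (k + 1) w (none : Node n) (some i)) →
        ((Matrix.of A ^ k).mulVec b) i = 0) := by
  induction k with
  | zero =>
    intro i
    simp only [pow_zero, Matrix.one_mulVec, zero_add, Finset.sum_range_one]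
    constructor
    · rintro w ⟨h0, h1, h2⟩
      have h3 := h2 0 (by omega)
      rw [zero_add] at h3
      rw [h0, h1] at h3 ⊢
      exact (hb i).1 h3
    · intro h
      apply (hb i).2
      intro he
      exact h ⟨_, walk_snoc (k := 0) (w := fun _ => none) ⟨rfl, rfl, by simp⟩ he⟩
  | succ k ih =>
    intro i
    rw [pow_succ', ← Matrix.mulVec_mulVec]
    have hsum : (Matrix.of A).mulVec ((Matrix.of A ^ k).mulVec b) i
        = ∑ m, A i m * ((Matrix.of A ^ k).mulVec b) m := rfl
    rw [hsum]
    constructor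
    · intro w hw
      have e := hw.2.2 (k + 1) (by omega)
      rw [hw.2.1] at e
      have hp := walk_pre hw (Nat.le_succ (k + 1))
      have hne : w (k + 1) ≠ none := hred.1.1 _ (hw.2.2 k (by omega))
      obtain ⟨m, hm⟩ := Option.ne_none_iff_exists'.1 hne
      rw [hm] at e hp
      rw [Finset.sum_eq_single m]
      · rw [(ih m).1 w hp, (hA i m).1 e, Finset.sum_range_succ _ (k + 1), hw.2.1, hm,
          Real.rpow_add_of_nonneg hx _ (hν _ e), mul_comm]
        exact Finset.sum_nonneg fun t ht => hν _ (hp.2.2 t (Finset.mem_range.1 ht))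
      · intro m' _ hmm
        by_cases e' : ((some m' : Node n), (some i : Node n)) ∈ E
        · rw [(ih m').2, mul_zero]
          rintro ⟨w', hw'⟩
          exact hmm (Option.some.inj (pred_unique hred hw' hp e' e))
        · rw [(hA i m').2 e', zero_mul]
      · simp
    · intro h
      apply Finset.sum_eq_zero
      intro m _
      by_cases e' : ((some m : Node n), (some i : Node n)) ∈ E
      · rw [(ih m).2, mul_zero]
        rintro ⟨w', hw'⟩
        exact h ⟨_, walk_snoc hw' e'⟩
      · rw [(hA i m).2 e', zero_mul]

end Helpers

/-- Lemma 7 of the paper: for the pair `(A, b)` built from a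
nonnegative bounded continuous function `f` and nonnegative edge exponents `ν`
(entry `f^{ν(e)}` on each edge `e` of the reduced graph `G`), the `i`-th entry of the
`j`-th moment `∫ A(σ)^{j−1} b(σ) dμ` equals `∫ f^{ν(τ)} dμ` where `τ` is the unique
walk of length `j` from `β` to `α_i` (and equals `0` if there is no such walk). -/
theorem stmt14 {n : ℕ} (hn : 1 ≤ n) (E : Set (Node n × Node n))
    (hred : ReducedGraph n E)
    (S : Type*) [TopologicalSpace S] [MeasurableSpace S] [BorelSpace S]
    (μ : Measure S) [IsProbabilityMeasure μ]
    (f : S → ℝ) (hf : Continuous f) (hfbd : ∃ C, ∀ σ, |f σ| ≤ C)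
    (hf0 : ∀ σ, 0 ≤ f σ)
    (ν : Node n × Node n → ℝ) (hν : ∀ e ∈ E, 0 ≤ ν e)
    (A : S → Fin n → Fin n → ℝ) (b : S → Fin n → ℝ)
    (hAc : Continuous A) (hbc : Continuous b)
    (hAbd : ∃ C, ∀ σ i j, |A σ i j| ≤ C) (hbbd : ∃ C, ∀ σ i, |b σ i| ≤ C)
    (hAdef : ∀ σ (i j : Fin n),
      (((some j : Node n), (some i : Node n)) ∈ E →
          A σ i j = f σ ^ ν ((some j : Node n), (some i : Node n))) ∧
      (((some j : Node n), (some i : Node n)) ∉ E → A σ i j = 0))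
    (hbdef : ∀ σ (i : Fin n),
      (((none : Node n), (some i : Node n)) ∈ E →
          b σ i = f σ ^ ν ((none : Node n), (some i : Node n))) ∧
      (((none : Node n), (some i : Node n)) ∉ E → b σ i = 0)) :
    ∀ j : ℕ, 1 ≤ j → ∀ i : Fin n,
      (∀ w : ℕ → Node n, IsWalk E j w (none : Node n) (some i) →
        (∫ σ, (Matrix.of (A σ) ^ (j - 1)).mulVec (b σ) ∂μ) i
          = ∫ σ, f σ ^ (∑ t ∈ Finset.range j, ν (w t, w (t + 1))) ∂μ) ∧
      ((¬ ∃ w : ℕ → Node n, IsWalk E j w (none : Node n) (some i)) →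
        (∫ σ, (Matrix.of (A σ) ^ (j - 1)).mulVec (b σ) ∂μ) i = 0) := by
  intro j hj
  obtain ⟨k, rfl⟩ : ∃ k, j = k + 1 := ⟨j - 1, by omega⟩
  simp only [Nat.add_sub_cancel]
  have key := fun σ => entry_formula hred (hf0 σ) ν hν (A σ) (b σ) (hAdef σ) (hbdef σ) k
  have hint : ∀ i, Integrable (fun σ => (Matrix.of (A σ) ^ k).mulVec (b σ) i) μ := by
    intro i
    by_cases h : ∃ w : ℕ → Node n, IsWalk E (k + 1) w (none : Node n) (some i)
    · obtain ⟨w, hw⟩ := h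
      have heq : (fun σ => (Matrix.of (A σ) ^ k).mulVec (b σ) i)
          = fun σ => f σ ^ (∑ t ∈ Finset.range (k + 1), ν (w t, w (t + 1))) :=
        funext fun σ => (key σ i).1 w hw
      rw [heq]
      have hc : 0 ≤ ∑ t ∈ Finset.range (k + 1), ν (w t, w (t + 1)) :=
        Finset.sum_nonneg fun t ht => hν _ (hw.2.2 t (Finset.mem_range.1 ht))
      obtain ⟨C, hC⟩ := hfbd
      refine Integrable.of_bound
        (hf.rpow_const fun _ => Or.inr hc).aestronglyMeasurable
        (C ^ (∑ t ∈ Finset.range (k + 1), ν (w t, w (t + 1)))) (Filter.Eventually.of_forall ?_)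
      intro σ
      rw [Real.norm_of_nonneg (Real.rpow_nonneg (hf0 σ) _)]
      exact Real.rpow_le_rpow (hf0 σ) ((le_abs_self _).trans (hC σ)) hc
    · have heq : (fun σ => (Matrix.of (A σ) ^ k).mulVec (b σ) i) = fun _ => 0 :=
        funext fun σ => (key σ i).2 h
      rw [heq]
      exact integrable_zero _ _ _
  intro i
  rw [eval_integral hint]
  refine ⟨fun w hw => ?_, fun h => ?_⟩
  · exact integral_congr_ae (Filter.Eventually.of_forall fun σ => (key σ i).1 w hw)
  · rw [integral_congr_ae (Filter.Eventually.of_forall fun σ => (key σ i).2 h)]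
    simp
end

section
/- Let Σ be a topological space, μ a Borel probability measure on Σ, and f : Σ → ℝ a continuous function with 0 ≤ f(σ) ≤ 1 for all σ, such that μ(f⁻¹(W)) > 0 for every open subset W of ℝ with W ∩ [0,1] nonempty. Let r_1, …, r_m be pairwise distinct nonnegative real numbers. If v = (v_1, …, v_m) ∈ ℝ^m satisfies Σ_{j=1}^m v_j ∫_Σ f(σ)^{r_j + k} dμ(σ) = 0 for every k ∈ ℕ, then v = 0. Equivalently, the matrix with rows indexed by j = 1, …, m, columns indexed by k ∈ ℕ, and entries ∫_Σ f^{r_j + k} dμ has linearly independent rows. -/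
open MeasureTheory

/-- abstract form of Lemma 8 of the paper: if `f : Σ → [0,1]` is
continuous and the pushforward of the probability measure `μ` under `f` has full
support in `[0,1]`, then for pairwise distinct nonnegative exponents `r_1, …, r_m`, the
only `v ∈ ℝ^m` with `∑_j v_j ∫ f^{r_j + k} dμ = 0` for all `k ∈ ℕ` is `v = 0`; i.e.
the moment matrix `(∫ f^{r_j + k} dμ)_{j,k}` has linearly independent rows. -/
theorem stmt15 (S : Type*) [TopologicalSpace S] [MeasurableSpace S] [BorelSpace S]
    (μ : Measure S) [IsProbabilityMeasure μ]
    (f : S → ℝ) (hf : Continuous f) (hf01 : ∀ σ, f σ ∈ Set.Icc (0 : ℝ) 1)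
    (hfull : ∀ W : Set ℝ, IsOpen W → (W ∩ Set.Icc (0 : ℝ) 1).Nonempty →
      0 < μ (f ⁻¹' W))
    (m : ℕ) (r : Fin m → ℝ) (hr : ∀ j, 0 ≤ r j) (hrinj : Function.Injective r)
    (v : Fin m → ℝ)
    (hv : ∀ k : ℕ, ∑ j : Fin m, v j * ∫ σ, f σ ^ (r j + (k : ℝ)) ∂μ = 0) :
    v = 0 := by
  classical
  set g : ℝ → ℝ := fun t => ∑ j, v j * t ^ (r j) with hg
  have hgc : Continuous g := by
    refine continuous_finsetSum _ fun j _ => continuous_const.mul ?_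
    exact Real.continuous_rpow_const (hr j)
  have hint : ∀ h : ℝ → ℝ, Continuous h → Integrable (fun σ => h (f σ)) μ := by
    intro h hh
    obtain ⟨C, hC⟩ := (isCompact_Icc (a := (0:ℝ)) (b := 1)).exists_bound_of_continuousOn
      hh.continuousOn
    exact Integrable.of_bound (hh.comp hf).measurable.aestronglyMeasurable C
      (Filter.Eventually.of_forall fun σ => hC _ (hf01 σ))
  have hpow : ∀ k : ℕ, ∫ σ, g (f σ) * f σ ^ k ∂μ = 0 := by
    intro k
    rw [← hv k]
    have : ∀ σ, g (f σ) * f σ ^ k = ∑ j, v j * f σ ^ (r j + (k : ℝ)) := by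
      intro σ
      simp only [hg, Finset.sum_mul]
      refine Finset.sum_congr rfl fun j _ => ?_
      rw [Real.rpow_add_of_nonneg (hf01 σ).1 (hr j) (Nat.cast_nonneg k), Real.rpow_natCast]
      ring
    simp_rw [this]
    rw [integral_finsetSum]
    · simp_rw [integral_const_mul]
    · intro j _
      exact hint (fun t => v j * t ^ (r j + (k : ℝ))) (continuous_const.mul
        (Real.continuous_rpow_const (add_nonneg (hr j) (Nat.cast_nonneg k))))
  have hpoly : ∀ p : Polynomial ℝ, ∫ σ, g (f σ) * p.eval (f σ) ∂μ = 0 := by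
    intro p
    simp_rw [Polynomial.eval_eq_sum_range, Finset.mul_sum]
    rw [integral_finsetSum]
    · refine Finset.sum_eq_zero fun k _ => ?_
      simp_rw [mul_left_comm]
      rw [integral_const_mul, hpow, mul_zero]
    · intro k _
      exact hint (fun t => g t * (p.coeff k * t ^ k)) (by fun_prop)
  obtain ⟨C, hC⟩ := (isCompact_Icc (a := (0:ℝ)) (b := 1)).exists_bound_of_continuousOn
      hgc.continuousOn
  have hC0 : 0 ≤ C := (norm_nonneg _).trans (hC 0 (by simp))
  have hsq : ∫ σ, g (f σ) * g (f σ) ∂μ = 0 := by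
    by_contra hne
    set A := ∫ σ, g (f σ) * g (f σ) ∂μ with hA
    have hApos : 0 < |A| := abs_pos.mpr hne
    obtain ⟨p, hp⟩ := exists_polynomial_near_of_continuousOn 0 1 g hgc.continuousOn
      (|A| / (C + 1)) (by positivity)
    have h1 : A = ∫ σ, g (f σ) * (g (f σ) - p.eval (f σ)) ∂μ := by
      simp_rw [mul_sub]
      rw [integral_sub (hint (fun t => g t * g t) (by fun_prop))
        (hint (fun t => g t * p.eval t) (by fun_prop)), hpoly, sub_zero]
    have h2 : |A| ≤ C * (|A| / (C + 1)) := by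
      have := norm_integral_le_of_norm_le_const (μ := μ)
        (f := fun σ => g (f σ) * (g (f σ) - p.eval (f σ))) (C := C * (|A| / (C + 1)))
        (Filter.Eventually.of_forall fun σ => by
          rw [norm_mul]
          refine mul_le_mul (hC _ (hf01 σ)) ?_ (norm_nonneg _) hC0
          rw [Real.norm_eq_abs, abs_sub_comm]
          exact (hp _ (hf01 σ)).le)
      rw [← h1] at this
      simpa using this
    have h3 : C * (|A| / (C + 1)) = |A| - |A| / (C + 1) := by
      field_simp
      ring
    have h4 : 0 < |A| / (C + 1) := by positivity
    linarith
  have hae : ∀ᵐ σ ∂μ, g (f σ) = 0 := by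
    have := (integral_eq_zero_iff_of_nonneg (fun σ => mul_self_nonneg (g (f σ)))
      (hint (fun t => g t * g t) (by fun_prop))).mp hsq
    filter_upwards [this] with σ hσ
    simpa using hσ
  have hg0 : ∀ t ∈ Set.Icc (0:ℝ) 1, g t = 0 := by
    intro t ht
    by_contra hne
    have := hfull {t | g t ≠ 0} (isOpen_ne_fun hgc continuous_const) ⟨t, hne, ht⟩
    exact this.ne' hae
  let φ : Fin m → (Multiplicative NNReal →* ℝ) := fun j =>
    { toFun := fun x => Real.exp (-((Multiplicative.toAdd x : NNReal) : ℝ)) ^ (r j)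
      map_one' := by simp
      map_mul' := fun x y => by
        rw [toAdd_mul, NNReal.coe_add, neg_add, Real.exp_add,
          Real.mul_rpow (Real.exp_pos _).le (Real.exp_pos _).le] }
  have hφ : Function.Injective φ := by
    intro i j hij
    have := DFunLike.congr_fun hij (Multiplicative.ofAdd (1 : NNReal))
    simp only [φ, MonoidHom.coe_mk, OneHom.coe_mk, toAdd_ofAdd, NNReal.coe_one,
      ← Real.exp_mul, Real.exp_eq_exp] at this
    exact hrinj (by linarith)
  have hli := (linearIndependent_monoidHom (Multiplicative NNReal) ℝ).comp φ hφ
  rw [Fintype.linearIndependent_iff] at hli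
  funext j
  refine hli v ?_ j
  funext x
  have := hg0 (Real.exp (-((Multiplicative.toAdd x : NNReal) : ℝ)))
    ⟨(Real.exp_pos _).le, by simp⟩
  simpa [hg, φ] using this
end

section
/- Let n ≥ 1 and let G = (V, E) ∈ 𝒢_{n,1} be acyclic (G contains no cycle) and contain no directed spanning path (no path of G visits all n+1 nodes). Then for every n × n real matrix A and every b ∈ ℝⁿ with A_{ij} = 0 whenever (α_j, α_i) ∉ E and b_i = 0 whenever (β, α_i) ∉ E, one has A^k b = 0 for every integer k ≥ n − 1; consequently, the ℝ-linear span of { A^k b : k ∈ ℕ } is a proper subspace of ℝⁿ. -/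
open MeasureTheory

theorem walk_inj_aux {V : Type*} (E : Set (V × V)) (hacyc : ∀ u : V, ¬ OnCycle E u)
    (m : ℕ) (w : ℕ → V) (hw : ∀ t < m, (w t, w (t + 1)) ∈ E) :
    ∀ d s : ℕ, 1 ≤ d → s + d ≤ m → w s ≠ w (s + d) := by
  intro d
  induction d using Nat.strong_induction_on with
  | _ d ih =>
    intro s hd hs heq
    apply hacyc (w s)
    refine ⟨d, fun t => w (s + t), hd, ⟨rfl, heq.symm, fun t ht => ?_⟩, ?_⟩
    · exact hw (s + t) (by omega)
    · intro a ha c hc hac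
      rcases lt_trichotomy a c with h | h | h
      · exfalso
        refine ih (c - a) (by omega) (s + a) (by omega) (by omega) ?_
        rw [show s + a + (c - a) = s + c by omega]
        exact hac
      · exact h
      · exfalso
        refine ih (a - c) (by omega) (s + c) (by omega) (by omega) ?_
        rw [show s + c + (a - c) = s + a by omega]
        exact hac.symm

theorem walk_of_ne_zero {n : ℕ} (E : Set (Node n × Node n))
    (A : Matrix (Fin n) (Fin n) ℝ) (b : Fin n → ℝ)
    (hA : ∀ i j : Fin n, ((some j : Node n), (some i : Node n)) ∉ E → A i j = 0)
    (hb : ∀ i : Fin n, ((none : Node n), (some i : Node n)) ∉ E → b i = 0) (k : ℕ) :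
    ∀ i, (A ^ k).mulVec b i ≠ 0 → ∃ w, IsWalk E (k + 1) w (none : Node n) (some i) := by
  induction k with
  | zero =>
    intro i hi
    have hE : ((none : Node n), (some i : Node n)) ∈ E := by
      by_contra h
      exact hi (by simpa using hb i h)
    refine ⟨fun t => if t = 0 then none else some i, by simp, by simp, ?_⟩
    intro t ht
    obtain rfl : t = 0 := by omega
    simpa using hE
  | succ k ih =>
    intro i hi
    rw [pow_succ', ← Matrix.mulVec_mulVec] at hi
    obtain ⟨j, -, hj⟩ := Finset.exists_ne_zero_of_sum_ne_zero
      (s := Finset.univ) (f := fun j => A i j * (A ^ k).mulVec b j) hi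
    have hE : ((some j : Node n), (some i : Node n)) ∈ E := by
      by_contra h
      exact left_ne_zero_of_mul hj (hA i j h)
    obtain ⟨w, h0, h1, h2⟩ := ih j (right_ne_zero_of_mul hj)
    refine ⟨fun t => if t ≤ k + 1 then w t else some i, by simpa using h0, by simp, ?_⟩
    intro t ht
    by_cases h : t = k + 1
    · subst h
      simpa [h1] using hE
    · have h3 : t ≤ k + 1 := by omega
      have h4 : t + 1 ≤ k + 1 := by omega
      simp only [h3, h4, if_true]
      exact h2 t (by omega)

/-- key step of the necessity proof: if `G ∈ 𝒢_{n,1}` is acyclic and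
has no directed spanning path, then every sparse pair `(A, b)` compliant with `G`
satisfies `A^k b = 0` for all `k ≥ n − 1`; hence the span of `{A^k b : k ∈ ℕ}` is a
proper subspace of `ℝⁿ`. -/
theorem stmt18 {n : ℕ} (hn : 1 ≤ n) (E : Set (Node n × Node n)) (hG : MemG n E)
    (hacyc : ∀ u : Node n, ¬ OnCycle E u)
    (hnospan : ¬ ∃ (k : ℕ) (w : ℕ → Node n) (u v : Node n),
        IsPath E k w u v ∧ ∀ x : Node n, ∃ t ≤ k, w t = x)
    (A : Matrix (Fin n) (Fin n) ℝ) (b : Fin n → ℝ)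
    (hA : ∀ i j : Fin n, ((some j : Node n), (some i : Node n)) ∉ E → A i j = 0)
    (hb : ∀ i : Fin n, ((none : Node n), (some i : Node n)) ∉ E → b i = 0) :
    (∀ k : ℕ, n - 1 ≤ k → (A ^ k).mulVec b = 0) ∧
    Submodule.span ℝ {x : Fin n → ℝ | ∃ k : ℕ, x = (A ^ k).mulVec b} ≠ ⊤ := by
  have key : ∀ k : ℕ, n - 1 ≤ k → (A ^ k).mulVec b = 0 := by
    intro k hk
    by_contra hne
    obtain ⟨i, hi⟩ := Function.ne_iff.mp hne
    obtain ⟨w, h0, h1, h2⟩ := walk_of_ne_zero E A b hA hb k i hi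
    have hinj := walk_inj_aux E hacyc (k + 1) w h2
    have hinj2 : ∀ s ≤ n, ∀ t ≤ n, w s = w t → s = t := by
      intro s hs t ht hst
      rcases lt_trichotomy s t with h | h | h
      · exfalso
        refine hinj (t - s) s (by omega) (by omega) ?_
        rw [show s + (t - s) = t by omega]
        exact hst
      · exact h
      · exfalso
        refine hinj (s - t) t (by omega) (by omega) ?_
        rw [show t + (s - t) = s by omega]
        exact hst.symm
    apply hnospan
    refine ⟨n, w, w 0, w n, ⟨⟨rfl, rfl, fun t ht => h2 t (by omega)⟩, hinj2⟩, ?_⟩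
    have hbij : Function.Bijective (fun t : Fin (n + 1) => w t) := by
      rw [Fintype.bijective_iff_injective_and_card]
      refine ⟨fun s t h => Fin.ext (hinj2 s (by omega) t (by omega) h), by simp⟩
    intro x
    obtain ⟨t, ht⟩ := hbij.2 x
    exact ⟨t, by omega, ht⟩
  refine ⟨key, fun htop => ?_⟩
  have hle : Submodule.span ℝ {x : Fin n → ℝ | ∃ k : ℕ, x = (A ^ k).mulVec b} ≤
      Submodule.span ℝ (Set.range (fun k : Fin (n - 1) => (A ^ (k : ℕ)).mulVec b)) := by
    rw [Submodule.span_le]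
    rintro x ⟨k, rfl⟩
    by_cases hk : n - 1 ≤ k
    · rw [key k hk]
      exact Submodule.zero_mem _
    · exact Submodule.subset_span ⟨⟨k, by omega⟩, rfl⟩
  rw [htop, top_le_iff] at hle
  have h1 := finrank_range_le_card (R := ℝ) (fun k : Fin (n - 1) => (A ^ (k : ℕ)).mulVec b)
  rw [Set.finrank, hle, finrank_top] at h1
  simp at h1
  omega
end
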